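/- arXiv:2303.02364 — 2 statements merged into one kernel-verified Lean document; each statement's English description precedes it below -/
import Mathlib

section
/- Let G be a group, let F : G → G be a group automorphism, let A ≤ G be a subgroup with F(a) = a for all a ∈ A, and let g ∈ G be such that ẇ := g⁻¹·F(g) lies in C_G(A). Then for any c ∈ C_G(A), the element gcg⁻¹ is fixed by F if and only if ẇ·F(c)·ẇ⁻¹ = c; consequently the map c ↦ gcg⁻¹ defines a group isomorphism from the subgroup {c ∈ C_G(A) : ẇ·F(c)·ẇ⁻¹ = c} of C_G(A) onto the subgroup C_G(gAg⁻¹) ∩ G^F of all F-fixed elements centralizing gAg⁻¹. -/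
/-!
Conjugation by `g` intertwines the twisted endomorphism `x ↦ w * F x * w⁻¹`, `w = g⁻¹ * F g`, with
`F`, so it carries the fixed points of the former onto those of the latter. Like every isomorphism,
it also carries centralizers to centralizers.
-/

open Function

theorem isFixedPt_apply_iff_of_semiconj {α β : Type*} {φ : α → β} {f : α → α} {f' : β → β}
    (hφ : Injective φ) (h : Semiconj φ f f') (x : α) : IsFixedPt f' (φ x) ↔ IsFixedPt f x := by
  rw [IsFixedPt, ← h.eq x, hφ.eq_iff, IsFixedPt]

section

variable {G H : Type*} [Group G] [Group H]

theorem map_eqLocus_id_of_semiconj (e : G ≃* H) {f : G →* G} {f' : H →* H}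
    (h : Semiconj e f f') :
    (f.eqLocus (MonoidHom.id G)).map (e : G →* H) = f'.eqLocus (MonoidHom.id H) := by
  ext y
  obtain ⟨x, rfl⟩ := e.surjective y
  exact (Subgroup.mem_map_iff_mem e.injective).trans
    (isFixedPt_apply_iff_of_semiconj e.injective h x).symm

theorem map_centralizer_eq_centralizer_image (e : G ≃* H) (s : Set G) :
    (Subgroup.centralizer s).map (e : G →* H) = Subgroup.centralizer (e '' s) := by
  apply le_antisymm (Subgroup.map_centralizer_le_centralizer_image s (e : G →* H))
  have hsymm := Subgroup.map_centralizer_le_centralizer_image (e '' s) (e.symm : H →* G)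
  rw [MonoidHom.coe_coe, LeftInverse.image_image e.symm_apply_apply] at hsymm
  rwa [Subgroup.map_equiv_eq_comap_symm, ← Subgroup.map_le_iff_le_comap]

theorem semiconj_conj_twisted (F : G →* G) (g : G) :
    Semiconj (MulAut.conj g) (MulAut.conj (g⁻¹ * F g) ∘ F) F := by
  intro x
  simp only [comp_apply, MulAut.conj_apply, map_mul F, map_inv F]
  group

end

theorem centralizer_twisted_fixed_points_general {G : Type*} [Group G] (F : G →* G)
    (S : Set G) (g w : G) (hw : w = g⁻¹ * F g) :
    (∀ c, F (g * c * g⁻¹) = g * c * g⁻¹ ↔ w * F c * w⁻¹ = c) ∧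
    ∃ e : ↥(Subgroup.centralizer S ⊓
            MonoidHom.eqLocus ((MulAut.conj w).toMonoidHom.comp F) (MonoidHom.id G)) ≃*
          ↥(Subgroup.centralizer (MulAut.conj g '' S) ⊓ MonoidHom.eqLocus F (MonoidHom.id G)),
      ∀ c, (e c : G) = g * (c : G) * g⁻¹ := by
  subst hw
  have hconj := semiconj_conj_twisted F g
  refine ⟨isFixedPt_apply_iff_of_semiconj (MulAut.conj g).injective hconj, ?_⟩
  let twisted := (MulAut.conj (g⁻¹ * F g)).toMonoidHom.comp F
  have hmap : (Subgroup.centralizer S ⊓ twisted.eqLocus (MonoidHom.id G)).map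
        (MulAut.conj g : G →* G) =
      Subgroup.centralizer (MulAut.conj g '' S) ⊓ F.eqLocus (MonoidHom.id G) := by
    rw [Subgroup.map_inf _ _ _ (MulAut.conj g).injective, map_centralizer_eq_centralizer_image,
      map_eqLocus_id_of_semiconj _ hconj]
  exact ⟨((MulAut.conj g).subgroupMap _).trans (MulEquiv.subgroupCongr hmap), fun _ => rfl⟩

/-- Let `F` be an automorphism of `G` fixing a subgroup `A` pointwise,
and `g ∈ G` with `w := g⁻¹ * F g ∈ C_G(A)`.  Then for `c ∈ C_G(A)`, `g c g⁻¹` is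
`F`-fixed iff `w F(c) w⁻¹ = c`, and `c ↦ g c g⁻¹` gives an isomorphism from
`{c ∈ C_G(A) : w F(c) w⁻¹ = c}` onto `C_G(gAg⁻¹) ∩ G^F`. -/
theorem centralizer_twisted_fixed_points {G : Type*} [Group G] (F : G ≃* G)
    (A : Subgroup G) (hA : ∀ a ∈ A, F a = a) (g w : G) (hw : w = g⁻¹ * F g)
    (hwC : w ∈ Subgroup.centralizer (A : Set G)) :
    (∀ c ∈ Subgroup.centralizer (A : Set G),
      (F (g * c * g⁻¹) = g * c * g⁻¹ ↔ w * F c * w⁻¹ = c)) ∧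
    ∃ e : ↥(Subgroup.centralizer (A : Set G) ⊓
            MonoidHom.eqLocus ((MulAut.conj w).toMonoidHom.comp F.toMonoidHom)
              (MonoidHom.id G)) ≃*
          ↥(Subgroup.centralizer ((Subgroup.map (MulAut.conj g).toMonoidHom A : Subgroup G) : Set G) ⊓
            MonoidHom.eqLocus F.toMonoidHom (MonoidHom.id G)),
      ∀ c, (e c : G) = g * (c : G) * g⁻¹ := by
  have ⟨hfix, hiso⟩ := centralizer_twisted_fixed_points_general F.toMonoidHom (A : Set G) g w hw
  exact ⟨fun c _ => hfix c, hiso⟩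
end

section
/- For every integer n ≥ 1 and every odd prime p, the general linear group GL_n(𝔽₂) over the field with two elements contains no elementary abelian p-subgroup of rank n; that is, GL_n(𝔽₂) has no subgroup isomorphic to the direct product of n copies of the cyclic group of order p. -/
/-!
Let `G` be a finite commutative group acting faithfully and linearly on a module `V` on which
multiplication by `|G|` is invertible. Averaging over the stabilizer `S` of a vector `v` is a
`G`-equivariant projection onto the vectors fixed by `S`, so adding to `v` the component of `w` in
the kernel of that projection cuts its stabilizer down to `S ∩ Stab w`. Hence the stabilizers of
vectors are closed under intersection, and faithfulness gives a vector with trivial stabilizer. If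
`V` is finite and nonzero, the orbit of this vector has `|G|` elements and, unless `G` is trivial,
misses `0`, so `|G| < |V|`. For `G = (ℤ/m)ⁿ` and `V = Rⁿ` this reads `mⁿ < |R|ⁿ`.
-/

open MulAction Representation

section RegularOrbit

variable (k : Type*) {G V : Type*} [CommRing k] [Group G] [AddCommGroup V] [Module k V]
  [DistribMulAction G V] [SMulCommClass G k V]

theorem averageMap_ofDistribMulAction_smul {M : Type*} [Monoid M] [DistribMulAction M V]
    [SMulCommClass M k V] [SMulCommClass M G V] [Fintype G] [Invertible (Fintype.card G : k)]
    (a : M) (v : V) :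
    (ofDistribMulAction k G V).averageMap (a • v) =
      a • (ofDistribMulAction k G V).averageMap v := by
  simp [GroupAlgebra.average, Finset.smul_sum, smul_comm a]

variable [IsMulCommutative G]

theorem exists_stabilizer_eq_inf (v w : V) [Finite (stabilizer G v)]
    (hcard : IsUnit (Nat.card (stabilizer G v) : k)) :
    ∃ u : V, stabilizer G u = stabilizer G v ⊓ stabilizer G w := by
  have := Fintype.ofFinite (stabilizer G v)
  rw [Nat.card_eq_fintype_card] at hcard
  have := hcard.invertible
  have : SMulCommClass G (stabilizer G v) V :=
    ⟨fun a s x => by simp only [Subgroup.smul_def, smul_smul, mul_comm' a]⟩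
  let ρ := ofDistribMulAction k (stabilizer G v) V
  let N := ρ.averageMap
  have N_smul (a : G) (x : V) : N (a • x) = a • N x := averageMap_ofDistribMulAction_smul k a x
  have smul_N {a : G} (ha : a • v = v) (x : V) : a • N x = N x :=
    ρ.averageMap_invariant x ⟨a, ha⟩
  have N_v : N v = v := ρ.averageMap_id v fun s => s.2
  have N_N (x : V) : N (N x) = N x := ρ.averageMap_id _ (ρ.averageMap_invariant x)
  have N_add : N (v + (w - N w)) = v := by rw [map_add, map_sub, N_v, N_N, sub_self, add_zero]
  refine ⟨v + (w - N w), Subgroup.ext fun a => ?_⟩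
  simp only [Subgroup.mem_inf, mem_stabilizer_iff]
  have fixes_v (ha : a • (v + (w - N w)) = v + (w - N w)) : a • v = v := by
    rw [← N_add, ← N_smul, ha]
  have fixes_add_iff (ha : a • v = v) :
      a • (v + (w - N w)) = v + (w - N w) ↔ a • w = w := by
    rw [smul_add, smul_sub, ha, smul_N ha, add_right_inj, sub_left_inj]
  exact ⟨fun ha => ⟨fixes_v ha, (fixes_add_iff (fixes_v ha)).1 ha⟩,
    fun ha => (fixes_add_iff ha.1).2 ha.2⟩

theorem exists_stabilizer_eq_bot [Finite G] [FaithfulSMul G V]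
    (hcard : IsUnit (Nat.card G : k)) : ∃ v : V, stabilizer G v = ⊥ := by
  have directed : Directed (· ≥ ·) (stabilizer G : V → Subgroup G) := fun v w => by
    obtain ⟨u, hu⟩ := exists_stabilizer_eq_inf k v w
      (isUnit_of_dvd_unit (Nat.cast_dvd_cast (stabilizer G v).card_subgroup_dvd_card) hcard)
    exact ⟨u, hu.trans_le inf_le_left, hu.trans_le inf_le_right⟩
  have exists_moved (a : G) : ∃ u : V, a • u = u → a = 1 := by
    by_contra! h
    exact (h 0).2 (FaithfulSMul.eq_of_smul_eq_smul fun u => by rw [(h u).1, one_smul])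
  choose u hu using exists_moved
  obtain ⟨v, hv⟩ := directed.finite_le u
  exact ⟨v, (Subgroup.eq_bot_iff_forall _).2 fun a ha => hu a (hv a ha)⟩

theorem natCard_lt_natCard_of_faithfulSMul [Finite V] [Nontrivial V] [FaithfulSMul G V]
    (hcard : IsUnit (Nat.card G : k)) : Nat.card G < Nat.card V := by
  have : Finite G := .of_injective _ (toPerm_injective (α := G) (β := V))
  obtain ⟨v, hv⟩ := exists_stabilizer_eq_bot (V := V) k hcard
  have card_eq : Nat.card G = (orbit G v).ncard := by
    rw [← index_stabilizer, hv, Subgroup.index_bot]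
  rw [card_eq]
  obtain rfl | hv0 := eq_or_ne v 0
  · simpa [orbit, Set.range_const] using Finite.one_lt_card (α := V)
  · refine Set.ncard_lt_card fun h => hv0 ?_
    obtain ⟨a, ha⟩ : (0 : V) ∈ orbit G v := h ▸ Set.mem_univ 0
    exact (smul_eq_zero_iff_eq a).1 ha

end RegularOrbit

section GeneralLinearGroup

variable {ι R : Type*} [Fintype ι] [DecidableEq ι] [CommRing R]

instance faithfulSMul_matrix_pi : FaithfulSMul (Matrix ι ι R) (ι → R) :=
  ⟨Matrix.ext_iff_smul.2⟩

variable [Nonempty ι] [Finite R] [Nontrivial R]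

theorem natCard_lt_pow_of_isMulCommutative (H : Subgroup (Matrix.GeneralLinearGroup ι R))
    [IsMulCommutative H] (hcard : IsUnit (Nat.card H : R)) :
    Nat.card H < Nat.card R ^ Nat.card ι := by
  rw [← Nat.card_fun]
  exact natCard_lt_natCard_of_faithfulSMul R hcard

theorem no_rank_n_elementary_abelian_in_GLn_F2_general {m : ℕ} (hunit : IsUnit (m : R))
    (hm : Nat.card R ≤ m) :
    ¬ ∃ H : Subgroup (Matrix.GeneralLinearGroup ι R),
        Nonempty (H ≃* (ι → Multiplicative (ZMod m))) := by
  rintro ⟨H, ⟨e⟩⟩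
  have card_H : Nat.card H = m ^ Nat.card ι := by
    rw [Nat.card_congr e.toEquiv, Nat.card_fun, Nat.card_congr Multiplicative.toAdd, Nat.card_zmod]
  have : IsMulCommutative H :=
    .of_comm fun a b => e.injective (by rw [map_mul, map_mul, mul_comm])
  have card_lt := natCard_lt_pow_of_isMulCommutative H (by
    rw [card_H, Nat.cast_pow]
    exact hunit.pow _)
  rw [card_H] at card_lt
  exact card_lt.not_ge (Nat.pow_le_pow_left hm _)

end GeneralLinearGroup

/-- For every `n ≥ 1` and every odd prime `p`, the group
`GL_n(𝔽₂)` contains no elementary abelian `p`-subgroup of rank `n`, i.e. no subgroup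
isomorphic to the direct product of `n` copies of the cyclic group of order `p`. -/
theorem no_rank_n_elementary_abelian_in_GLn_F2 (n : ℕ) (hn : 1 ≤ n)
    (p : ℕ) (hp : p.Prime) (hodd : Odd p) :
    ¬ ∃ H : Subgroup (Matrix.GeneralLinearGroup (Fin n) (ZMod 2)),
        Nonempty (H ≃* (Fin n → Multiplicative (ZMod p))) := by
  have : Nonempty (Fin n) := ⟨⟨0, hn⟩⟩
  have isUnit_p : IsUnit (p : ZMod 2) := by
    rw [ZMod.natCast_eq_one_iff_odd.2 hodd]
    exact isUnit_one
  exact no_rank_n_elementary_abelian_in_GLn_F2_general isUnit_p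
    ((Nat.card_zmod 2).trans_le hp.two_le)
end
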